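/- (Theorem 1.) Let d ≥ 1, let w ∈ ℝ^d with w ≠ 0, b ∈ ℝ, ε > 0, and consider balanced Gaussian mixture data with means μ₊, μ₋ and σ > 0. Define the overall adversarial rate p_adv = (1/2)·P_{N(μ₊,σ²I_d)}({x : w·x + b > 0 and there exists v with ‖v‖₂ ≤ ε and w·(x+v) + b ≤ 0}) + (1/2)·P_{N(μ₋,σ²I_d)}({x : w·x + b ≤ 0 and there exists v with ‖v‖₂ ≤ ε and w·(x+v) + b > 0}). Then p_adv = 1 − p_m − (1/2)[Φ((w·μ + b')/(‖w‖₂σ) − ε/σ) + Φ((w·μ − b')/(‖w‖₂σ) − ε/σ)], where p_m = 1 − (1/2)[Φ((w·μ + b')/(‖w‖₂σ)) + Φ((w·μ − b')/(‖w‖₂σ))] is the misclassification rate. -/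

import Mathlib

open MeasureTheory ProbabilityTheory
open scoped ENNReal NNReal

/-- Euclidean inner product on `ℝ^d`. -/
noncomputable def dotp {d : ℕ} (w x : Fin d → ℝ) : ℝ := ∑ i, w i * x i

/-- The `ℓ₂` norm on `ℝ^d`. -/
noncomputable def l2 {d : ℕ} (w : Fin d → ℝ) : ℝ := Real.sqrt (∑ i, (w i)^2)

/-- The product Gaussian measure `N(m, σ²I_d)` on `ℝ^d`. -/
noncomputable def gaussPi {d : ℕ} (m : Fin d → ℝ) (σ : ℝ) : Measure (Fin d → ℝ) :=
  Measure.pi fun i => gaussianReal (m i) ((σ^2).toNNReal)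

/-- The standard normal cumulative distribution function `Φ`. -/
noncomputable def Phi (x : ℝ) : ℝ := ((gaussianReal 0 1) (Set.Iic x)).toReal

/-- The `ℓp` norm on `ℝ^d` for `p ∈ [1,∞]` (as an extended real exponent). -/
noncomputable def lpnorm {d : ℕ} (p : ℝ≥0∞) (v : Fin d → ℝ) : ℝ :=
  if p = ∞ then ⨆ i, |v i| else (∑ i, |v i| ^ p.toReal) ^ (1 / p.toReal)

/-- The `ℓp` norm on `ℝ^d` for a real exponent `p ∈ [1,∞)`. -/
noncomputable def lpR {d : ℕ} (p : ℝ) (v : Fin d → ℝ) : ℝ := (∑ i, |v i| ^ p) ^ (1/p)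

lemma map_dotp_gaussPi {d : ℕ} (w m : Fin d → ℝ) (σ : ℝ) :
    (gaussPi m σ).map (fun x => dotp w x) =
      gaussianReal (dotp w m) (((l2 w * σ)^2).toNNReal) := by
  have hmeas : Measurable (fun x : Fin d → ℝ => dotp w x) := by
    unfold dotp; fun_prop
  have : IsProbabilityMeasure (gaussPi m σ) := by unfold gaussPi; infer_instance
  have : IsProbabilityMeasure ((gaussPi m σ).map (fun x => dotp w x)) :=
    Measure.isProbabilityMeasure_map hmeas.aemeasurable
  apply Measure.ext_of_charFun
  ext t
  rw [charFun_gaussianReal, charFun_apply_real, integral_map hmeas.aemeasurable (by fun_prop)]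
  have h1 : ∀ x : Fin d → ℝ, Complex.exp (t * (dotp w x : ℝ) * Complex.I) =
      ∏ i, Complex.exp (((t * w i : ℝ) : ℂ) * (x i : ℝ) * Complex.I) := by
    intro x
    rw [← Complex.exp_sum]
    congr 1
    simp only [dotp]
    push_cast
    rw [Finset.mul_sum, Finset.sum_mul]
    exact Finset.sum_congr rfl fun i _ => by ring
  simp_rw [h1]
  unfold gaussPi
  rw [integral_fintype_prod_eq_prod (𝕜 := ℂ)
    (f := fun i (y : ℝ) => Complex.exp (((t * w i : ℝ) : ℂ) * (y : ℝ) * Complex.I))]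
  simp_rw [← charFun_apply_real, charFun_gaussianReal]
  rw [← Complex.exp_sum]
  congr 1
  have h2 : (l2 w * σ)^2 = (∑ i, (w i)^2) * σ^2 := by
    rw [mul_pow, l2, Real.sq_sqrt (Finset.sum_nonneg fun i _ => sq_nonneg _)]
  have e1 : ((((σ^2).toNNReal : ℝ≥0) : ℝ) : ℂ) = (σ : ℂ)^2 := by
    rw [Real.coe_toNNReal _ (sq_nonneg _)]; push_cast; rfl
  have e2 : (((((l2 w * σ)^2).toNNReal : ℝ≥0) : ℝ) : ℂ) = (∑ i, (w i : ℂ)^2) * (σ : ℂ)^2 := by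
    rw [Real.coe_toNNReal _ (sq_nonneg _), h2]; push_cast; rfl
  rw [e1, e2, Finset.sum_sub_distrib]
  simp only [dotp]
  push_cast
  simp only [Finset.mul_sum, Finset.sum_mul, Finset.sum_div]
  congr 1 <;> exact Finset.sum_congr rfl fun i _ => by ring

lemma gaussianReal_Iic (m s t : ℝ) (hs : 0 < s) :
    (gaussianReal m ((s^2).toNNReal)).real (Set.Iic t) = Phi ((t - m) / s) := by
  have h : gaussianReal m ((s^2).toNNReal) = (gaussianReal 0 1).map (fun x => s * x + m) := by
    change _ = (gaussianReal 0 1).map ((fun x => x + m) ∘ (fun x => s * x))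
    rw [← Measure.map_map (g := fun x => x + m) (f := fun x => s * x) (by fun_prop) (by fun_prop),
      gaussianReal_map_const_mul, gaussianReal_map_add_const]
    congr 1
    · simp
    · ext; simp [sq_nonneg]
  rw [h, Phi, Measure.real, Measure.map_apply (by fun_prop) measurableSet_Iic]
  congr 2
  ext x
  simp only [Set.mem_preimage, Set.mem_Iic]
  rw [le_div_iff₀ hs]
  constructor <;> intro h <;> linarith

lemma gaussianReal_Ioc (m s t u : ℝ) (hs : 0 < s) (htu : t ≤ u) :
    (gaussianReal m ((s^2).toNNReal)).real (Set.Ioc t u)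
      = Phi ((u - m) / s) - Phi ((t - m) / s) := by
  have h : Set.Ioc t u = Set.Iic u \ Set.Iic t := by
    ext x; simp [and_comm]
  rw [← gaussianReal_Iic m s u hs, ← gaussianReal_Iic m s t hs, h,
    measureReal_diff (Set.Iic_subset_Iic.2 htu) measurableSet_Iic]

lemma Phi_neg (x : ℝ) : Phi (-x) = 1 - Phi x := by
  have : NullSingletonClass (gaussianReal 0 1) := nullSingletonClass_gaussianReal one_ne_zero
  have h : (gaussianReal 0 1).map (fun x => -x) = gaussianReal 0 1 := by
    rw [gaussianReal_map_neg, neg_zero]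
  have h1 : Phi (-x) = (gaussianReal 0 1).real (Set.Ici x) := by
    rw [Phi]
    conv_lhs => rw [← h]
    rw [Measure.map_apply (by fun_prop) measurableSet_Iic, Measure.real]
    congr 2
    ext y; simp
  rw [h1, measureReal_congr (Ioi_ae_eq_Ici (μ := gaussianReal 0 1) (a := x)).symm,
    ← Set.compl_Iic, probReal_compl_eq_one_sub measurableSet_Iic]
  rfl

lemma dotp_add {d : ℕ} (w x y : Fin d → ℝ) : dotp w (x + y) = dotp w x + dotp w y := by
  simp [dotp, mul_add, Finset.sum_add_distrib]

lemma dotp_smul {d : ℕ} (w x : Fin d → ℝ) (c : ℝ) : dotp w (c • x) = c * dotp w x := by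
  simp only [dotp, Finset.mul_sum, Pi.smul_apply, smul_eq_mul]
  exact Finset.sum_congr rfl fun i _ => by ring

lemma l2_pos {d : ℕ} (w : Fin d → ℝ) (hw : w ≠ 0) : 0 < l2 w := by
  obtain ⟨i, hi⟩ := Function.ne_iff.1 hw
  apply Real.sqrt_pos.2
  exact Finset.sum_pos' (fun i _ => sq_nonneg _) ⟨i, Finset.mem_univ i, by
    have : w i ≠ 0 := hi
    positivity⟩

lemma abs_dotp_le {d : ℕ} (w v : Fin d → ℝ) : |dotp w v| ≤ l2 w * l2 v := by
  rw [l2, l2, ← Real.sqrt_mul (Finset.sum_nonneg fun i _ => sq_nonneg _)]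
  exact Real.abs_le_sqrt (Finset.sum_mul_sq_le_sq_mul_sq _ _ _)

lemma l2_smul {d : ℕ} (c : ℝ) (v : Fin d → ℝ) : l2 (c • v) = |c| * l2 v := by
  simp only [l2, Pi.smul_apply, smul_eq_mul, mul_pow, ← Finset.mul_sum]
  rw [Real.sqrt_mul (sq_nonneg _), Real.sqrt_sq_eq_abs]

lemma dotp_self {d : ℕ} (w : Fin d → ℝ) : dotp w w = l2 w * l2 w := by
  rw [l2, Real.mul_self_sqrt (Finset.sum_nonneg fun i _ => sq_nonneg _)]
  simp [dotp, sq]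

lemma exists_dotp {d : ℕ} (w : Fin d → ℝ) (hw : w ≠ 0) (c : ℝ) :
    ∃ v : Fin d → ℝ, l2 v = |c| ∧ dotp w v = c * l2 w := by
  have h := l2_pos w hw
  refine ⟨(c / l2 w) • w, ?_, ?_⟩
  · rw [l2_smul, abs_div, abs_of_pos h]; field_simp
  · rw [dotp_smul, dotp_self]; field_simp

lemma gaussPi_Ioc {d : ℕ} (w : Fin d → ℝ) (hw : w ≠ 0) (m : Fin d → ℝ) (σ : ℝ) (hσ : 0 < σ)
    (t u : ℝ) (htu : t ≤ u) :
    ((gaussPi m σ) ((fun x => dotp w x) ⁻¹' Set.Ioc t u)).toReal =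
      Phi ((u - dotp w m) / (l2 w * σ)) - Phi ((t - dotp w m) / (l2 w * σ)) := by
  have hmeas : Measurable (fun x : Fin d → ℝ => dotp w x) := by
    unfold dotp; fun_prop
  rw [← Measure.map_apply hmeas measurableSet_Ioc, map_dotp_gaussPi]
  exact gaussianReal_Ioc _ _ _ _ (mul_pos (l2_pos w hw) hσ) htu

/-- Theorem 1: the overall adversarial rate of a linear classifier
for balanced Gaussian mixture data. -/
theorem adversarial_rate {d : ℕ} (hd : 1 ≤ d)
    (w : Fin d → ℝ) (hw : w ≠ 0) (b ε : ℝ) (hε : 0 < ε)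
    (μp μm : Fin d → ℝ) (σ : ℝ) (hσ : 0 < σ)
    (μ μbar : Fin d → ℝ) (b' : ℝ)
    (hμ : μ = (1/2 : ℝ) • (μp - μm)) (hμbar : μbar = (1/2 : ℝ) • (μp + μm))
    (hb' : b' = dotp w μbar + b)
    (padv pm : ℝ)
    (hpadv : padv =
        (1/2) * ((gaussPi μp σ) {x : Fin d → ℝ | 0 < dotp w x + b ∧
            ∃ v : Fin d → ℝ, l2 v ≤ ε ∧ dotp w (x + v) + b ≤ 0}).toReal
      + (1/2) * ((gaussPi μm σ) {x : Fin d → ℝ | dotp w x + b ≤ 0 ∧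
            ∃ v : Fin d → ℝ, l2 v ≤ ε ∧ 0 < dotp w (x + v) + b}).toReal)
    (hpm : pm = 1 - (1/2) * (Phi ((dotp w μ + b') / (l2 w * σ)) +
                              Phi ((dotp w μ - b') / (l2 w * σ)))) :
    padv = 1 - pm - (1/2) * (Phi ((dotp w μ + b') / (l2 w * σ) - ε / σ) +
                              Phi ((dotp w μ - b') / (l2 w * σ) - ε / σ)) := by
  have hW := l2_pos w hw
  have hWε := mul_pos hW hε
  have s1 : {x : Fin d → ℝ | 0 < dotp w x + b ∧
      ∃ v : Fin d → ℝ, l2 v ≤ ε ∧ dotp w (x + v) + b ≤ 0} =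
      (fun x => dotp w x) ⁻¹' Set.Ioc (-b) (l2 w * ε - b) := by
    ext x
    simp only [Set.mem_ofPred_eq, Set.mem_preimage, Set.mem_Ioc]
    constructor
    · rintro ⟨h, v, hv, hx⟩
      rw [dotp_add] at hx
      have := (abs_le.1 (abs_dotp_le w v)).1
      have := mul_le_mul_of_nonneg_left hv hW.le
      constructor <;> linarith
    · rintro ⟨h1, h2⟩
      obtain ⟨v, hv, hv'⟩ := exists_dotp w hw (-ε)
      refine ⟨by linarith, v, by rw [hv, abs_neg, abs_of_pos hε], ?_⟩
      rw [dotp_add, hv']; linarith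
  have s2 : {x : Fin d → ℝ | dotp w x + b ≤ 0 ∧
      ∃ v : Fin d → ℝ, l2 v ≤ ε ∧ 0 < dotp w (x + v) + b} =
      (fun x => dotp w x) ⁻¹' Set.Ioc (-(l2 w * ε) - b) (-b) := by
    ext x
    simp only [Set.mem_ofPred_eq, Set.mem_preimage, Set.mem_Ioc]
    constructor
    · rintro ⟨h, v, hv, hx⟩
      rw [dotp_add] at hx
      have := (abs_le.1 (abs_dotp_le w v)).2
      have := mul_le_mul_of_nonneg_left hv hW.le
      constructor <;> linarith
    · rintro ⟨h1, h2⟩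
      obtain ⟨v, hv, hv'⟩ := exists_dotp w hw ε
      refine ⟨by linarith, v, by rw [hv, abs_of_pos hε], ?_⟩
      rw [dotp_add, hv']; linarith
  rw [s1, s2, gaussPi_Ioc w hw _ σ hσ _ _ (by linarith),
    gaussPi_Ioc w hw _ σ hσ _ _ (by linarith)] at hpadv
  have hA : dotp w μ + b' = dotp w μp + b := by
    rw [hb', hμ, hμbar, dotp_smul, dotp_smul, sub_eq_add_neg μp μm, dotp_add, dotp_add,
      ← neg_one_smul ℝ μm, dotp_smul]; ring
  have hB : dotp w μ - b' = -(dotp w μm + b) := by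
    rw [hb', hμ, hμbar, dotp_smul, dotp_smul, sub_eq_add_neg μp μm, dotp_add, dotp_add,
      ← neg_one_smul ℝ μm, dotp_smul]; ring
  rw [hA, hB] at hpm
  rw [hA, hB]
  have q1 : (l2 w * ε - b - dotp w μp) / (l2 w * σ) =
      -((dotp w μp + b) / (l2 w * σ) - ε / σ) := by field_simp; ring
  have q2 : (-b - dotp w μp) / (l2 w * σ) = -((dotp w μp + b) / (l2 w * σ)) := by
    field_simp; ring
  have q3 : (-(l2 w * ε) - b - dotp w μm) / (l2 w * σ) =
      -(dotp w μm + b) / (l2 w * σ) - ε / σ := by field_simp; ring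
  have q4 : (-b - dotp w μm) / (l2 w * σ) = -(dotp w μm + b) / (l2 w * σ) := by
    congr 1; ring
  rw [q1, q2, q3, q4, Phi_neg, Phi_neg] at hpadv
  rw [hpadv, hpm]; ring
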